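/- arXiv:2312.13023 — 3 statements merged into one kernel-verified Lean document; each statement's English description precedes it below -/
import Mathlib

section
/- Let Z and X be nonempty finite types and let p : Z × X → ℝ be a joint probability mass function (p is nonnegative and sums to 1) whose marginals p_Z(z) = Σ_x p(z,x) and p_X(x) = Σ_z p(z,x) are strictly positive, and suppose p(z,x) > 0 for all z, x. Define the conditional probability p(x|z) = p(z,x)/p_Z(z), the mutual information MI(Z,X) = Σ_{z,x} p(z,x) · log( p(z,x) / (p_Z(z) · p_X(x)) ), and the quantity L_UB = Σ_{z,x} p(z,x) · log p(x|z) − Σ_{z,x} p_Z(z) · p_X(x) · log p(x|z). Then MI(Z,X) ≤ L_UB. -/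
open Real Finset

/-!
Let `q` be the product of the marginals of `p`. Since `log p(x|z)` and `log (p(z,x) / q(z,x))`
differ by `log p_X(x)`, and `p` and `q` have the same second marginal, `L_UB = ∑ (p - q) log p(x|z)`
equals `∑ (p - q) log (p / q) = D(p‖q) + D(q‖p)`. The first term is the mutual information, and the
second is nonnegative by Gibbs' inequality.
-/

section RelativeEntropy

variable {ι : Type*} [Fintype ι]

/-- The relative entropy (Kullback–Leibler divergence) `D(q‖p)` of two weight functions on a
finite type. It is meaningful when `p i = 0` implies `q i = 0`; where this fails the term that
should be `∞` is `0`, because `q i / 0 = 0` and `log 0 = 0`. -/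
noncomputable def relEntropy (q p : ι → ℝ) : ℝ :=
  ∑ i, q i * log (q i / p i)

theorem sub_le_mul_log_div {q p : ℝ} (hq : 0 ≤ q) (hp : 0 ≤ p) (hqp : p = 0 → q = 0) :
    q - p ≤ q * log (q / p) := by
  rcases hp.eq_or_lt' with rfl | hp
  · simp [hqp rfl]
  have h_klFun : p * InformationTheory.klFun (q / p) = q * log (q / p) - (q - p) := by
    rw [InformationTheory.klFun]
    field_simp
    ring
  have h_nonneg := mul_nonneg hp.le (InformationTheory.klFun_nonneg (div_nonneg hq hp.le))
  linarith

theorem relEntropy_nonneg {q p : ι → ℝ} (hq : ∀ i, 0 ≤ q i) (hp : ∀ i, 0 ≤ p i)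
    (hqp : ∀ i, p i = 0 → q i = 0) (hsum : ∑ i, p i ≤ ∑ i, q i) : 0 ≤ relEntropy q p :=
  calc
    0 ≤ ∑ i, (q i - p i) := by rw [sum_sub_distrib]; exact sub_nonneg.2 hsum
    _ ≤ relEntropy q p := sum_le_sum fun i _ => sub_le_mul_log_div (hq i) (hp i) (hqp i)

theorem relEntropy_add_relEntropy_comm (p q : ι → ℝ) :
    relEntropy p q + relEntropy q p = ∑ i, (p i - q i) * log (p i / q i) := by
  simp only [relEntropy, ← sum_add_distrib]
  refine sum_congr rfl fun i _ => ?_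
  rw [← inv_div (p i) (q i), log_inv]
  ring

end RelativeEntropy

section Marginals

variable {Z X : Type*}

/-- The marginal `p_Z` of a weight function `p` on `Z × X`. -/
def fstMarginal [Fintype X] (p : Z × X → ℝ) (z : Z) : ℝ :=
  ∑ x, p (z, x)

/-- The marginal `p_X` of a weight function `p` on `Z × X`. -/
def sndMarginal [Fintype Z] (p : Z × X → ℝ) (x : X) : ℝ :=
  ∑ z, p (z, x)

/-- The conditional probability `p(x|z)`, with the junk value `0` where `p_Z(z) = 0`. -/
noncomputable def condProb [Fintype X] (p : Z × X → ℝ) (z : Z) (x : X) : ℝ :=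
  p (z, x) / fstMarginal p z

theorem fstMarginal_pos [Fintype X] {p : Z × X → ℝ} (hp : ∀ i, 0 ≤ p i) {i : Z × X}
    (hi : 0 < p i) : 0 < fstMarginal p i.1 :=
  hi.trans_le (single_le_sum (fun x _ => hp (i.1, x)) (mem_univ i.2))

theorem sndMarginal_pos [Fintype Z] {p : Z × X → ℝ} (hp : ∀ i, 0 ≤ p i) {i : Z × X}
    (hi : 0 < p i) : 0 < sndMarginal p i.2 :=
  hi.trans_le (single_le_sum (fun z _ => hp (z, i.2)) (mem_univ i.1))

variable [Fintype Z] [Fintype X]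

/-- The product `p_Z ⊗ p_X` of the marginals of `p`. The mutual information of `p` is
`relEntropy p (prodMarginals p)`. -/
def prodMarginals (p : Z × X → ℝ) (i : Z × X) : ℝ :=
  fstMarginal p i.1 * sndMarginal p i.2

/-- The bound `L_UB`: the difference of the means of `log p(x|z)` under the joint weights and under
the product of the marginals. -/
noncomputable def contrastiveBound (p : Z × X → ℝ) : ℝ :=
  ∑ i, p i * log (condProb p i.1 i.2) - ∑ i, prodMarginals p i * log (condProb p i.1 i.2)

theorem sum_fstMarginal (p : Z × X → ℝ) : ∑ z, fstMarginal p z = ∑ i, p i :=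
  (Fintype.sum_prod_type p).symm

theorem sum_sndMarginal (p : Z × X → ℝ) : ∑ x, sndMarginal p x = ∑ i, p i :=
  (Fintype.sum_prod_type_right p).symm

theorem sum_mul_comp_snd (p : Z × X → ℝ) (f : X → ℝ) :
    ∑ i, p i * f i.2 = ∑ x, sndMarginal p x * f x := by
  simp only [Fintype.sum_prod_type_right, sndMarginal, sum_mul]

theorem sndMarginal_prodMarginals (p : Z × X → ℝ) (x : X) :
    sndMarginal (prodMarginals p) x = (∑ i, p i) * sndMarginal p x := by
  rw [← sum_fstMarginal, sum_mul, sndMarginal]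
  rfl

theorem sum_prodMarginals (p : Z × X → ℝ) : ∑ i, prodMarginals p i = (∑ i, p i) ^ 2 := by
  simp only [← sum_sndMarginal (prodMarginals p), sndMarginal_prodMarginals, ← mul_sum,
    sum_sndMarginal, sq]

theorem sum_sub_prodMarginals_mul_comp_snd {p : Z × X → ℝ} (hsum : ∑ i, p i = 1) (f : X → ℝ) :
    ∑ i, (p i - prodMarginals p i) * f i.2 = 0 := by
  simp only [sub_mul, sum_sub_distrib, sum_mul_comp_snd, sndMarginal_prodMarginals, hsum, one_mul,
    sub_self]

theorem prodMarginals_nonneg {p : Z × X → ℝ} (hp : ∀ i, 0 ≤ p i) (i : Z × X) :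
    0 ≤ prodMarginals p i :=
  mul_nonneg (sum_nonneg fun _ _ => hp _) (sum_nonneg fun _ _ => hp _)

theorem log_condProb {p : Z × X → ℝ} (hp : ∀ i, 0 ≤ p i) {i : Z × X} (hi : 0 < p i) :
    log (condProb p i.1 i.2) = log (p i / prodMarginals p i) + log (sndMarginal p i.2) := by
  have h_fst := fstMarginal_pos hp hi
  have h_snd := sndMarginal_pos hp hi
  have h_ratio : 0 < p i / prodMarginals p i := div_pos hi (mul_pos h_fst h_snd)
  rw [← log_mul h_ratio.ne' h_snd.ne', prodMarginals, ← div_div,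
    div_mul_cancel₀ _ h_snd.ne', condProb]

theorem contrastiveBound_eq_relEntropy_add {p : Z × X → ℝ} (hp : ∀ i, 0 ≤ p i)
    (hsum : ∑ i, p i = 1) (hac : ∀ i, p i = 0 → prodMarginals p i = 0) :
    contrastiveBound p =
      relEntropy p (prodMarginals p) + relEntropy (prodMarginals p) p :=
  calc
    contrastiveBound p = ∑ i, (p i - prodMarginals p i) * log (condProb p i.1 i.2) := by
      simp only [contrastiveBound, sub_mul, sum_sub_distrib]
    _ = ∑ i, (p i - prodMarginals p i) * log (p i / prodMarginals p i) +
          ∑ i, (p i - prodMarginals p i) * log (sndMarginal p i.2) := by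
      rw [← sum_add_distrib]
      refine sum_congr rfl fun i _ => ?_
      rcases (hp i).eq_or_lt' with hi | hi
      · simp [hi, hac i hi]
      · rw [log_condProb hp hi, mul_add]
    _ = relEntropy p (prodMarginals p) + relEntropy (prodMarginals p) p := by
      rw [sum_sub_prodMarginals_mul_comp_snd hsum fun x => log (sndMarginal p x), add_zero,
        relEntropy_add_relEntropy_comm]

theorem mi_le_LUB_general {p : Z × X → ℝ} (hp : ∀ i, 0 ≤ p i) (hsum : ∑ i, p i = 1)
    (hac : ∀ i, p i = 0 → prodMarginals p i = 0) :
    relEntropy p (prodMarginals p) ≤ contrastiveBound p := by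
  have h_gibbs : 0 ≤ relEntropy (prodMarginals p) p :=
    relEntropy_nonneg (prodMarginals_nonneg hp) hp hac (by rw [sum_prodMarginals, hsum, one_pow])
  rw [contrastiveBound_eq_relEntropy_add hp hsum hac]
  exact le_add_of_nonneg_right h_gibbs

end Marginals

/-- For a strictly positive joint pmf `p` on `Z × X` with marginals `pZ`, `pX`
and conditional `pc z x = p (z,x) / pZ z`, the mutual information
`MI(Z,X) = Σ_{z,x} p(z,x) log (p(z,x) / (pZ z * pX x))` is bounded above by
`L_UB = Σ_{z,x} p(z,x) log (pc z x) − Σ_{z,x} pZ z * pX x * log (pc z x)`. -/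
theorem mi_le_LUB {Z X : Type*} [Fintype Z] [Fintype X] [Nonempty Z] [Nonempty X]
    (p : Z × X → ℝ) (pZ : Z → ℝ) (pX : X → ℝ) (pc : Z → X → ℝ)
    (hnonneg : ∀ z x, 0 ≤ p (z, x))
    (hpos : ∀ z x, 0 < p (z, x))
    (hsum : ∑ zx : Z × X, p zx = 1)
    (hpZ : ∀ z, pZ z = ∑ x : X, p (z, x))
    (hpX : ∀ x, pX x = ∑ z : Z, p (z, x))
    (hpZpos : ∀ z, 0 < pZ z)
    (hpXpos : ∀ x, 0 < pX x)
    (hpc : ∀ z x, pc z x = p (z, x) / pZ z) :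
    (∑ z : Z, ∑ x : X, p (z, x) * Real.log (p (z, x) / (pZ z * pX x))) ≤
      (∑ z : Z, ∑ x : X, p (z, x) * Real.log (pc z x)) -
        (∑ z : Z, ∑ x : X, pZ z * pX x * Real.log (pc z x)) := by
  obtain rfl : pZ = fstMarginal p := funext hpZ
  obtain rfl : pX = sndMarginal p := funext hpX
  obtain rfl : pc = condProb p := funext₂ hpc
  simpa only [relEntropy, contrastiveBound, prodMarginals, Fintype.sum_prod_type] using
    mi_le_LUB_general (fun i => hnonneg i.1 i.2) hsum fun i hi => absurd hi (hpos i.1 i.2).ne'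
end

section
/- Let Y and Z be nonempty finite types and let p : Y × Z → ℝ be a joint probability mass function with p(y,z) > 0 for all y, z, with marginals p_Y(y) = Σ_z p(y,z) and p_Z(z) = Σ_y p(y,z). Define MI(Z,Y) = Σ_{y,z} p(y,z) · log( p(y,z) / (p_Y(y) · p_Z(z)) ). Then for every function F : Y × Z → ℝ, MI(Z,Y) ≥ Σ_{y,z} p(y,z) · F(y,z) − log( Σ_{y,z} p_Y(y) · p_Z(z) · exp(F(y,z)) ). -/
open Real Finset

/-!
Absorbing `F` into the reference weights, `q ↦ q * exp F`, lowers the relative entropy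
`∑ p * log (p / q)` by exactly `∑ p * F`. By the log-sum inequality, that is, Jensen's inequality
for `x ↦ x * log x`, what remains is at least `-log (∑ q * exp F)`. Mutual information is the case
where `q` is the product of the marginals of `p`.
-/

theorem sum_mul_log_sum_div_sum_le {ι : Type*} (s : Finset ι) (a b : ι → ℝ)
    (ha : ∀ i ∈ s, 0 ≤ a i) (hb : ∀ i ∈ s, 0 ≤ b i) (hab : ∀ i ∈ s, b i = 0 → a i = 0) :
    (∑ i ∈ s, a i) * log ((∑ i ∈ s, a i) / ∑ i ∈ s, b i) ≤
      ∑ i ∈ s, a i * log (a i / b i) := by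
  rcases (sum_nonneg hb).eq_or_lt with hB | hB
  · have ha_zero : ∀ i ∈ s, a i = 0 := fun i hi =>
      hab i hi ((sum_eq_zero_iff_of_nonneg hb).1 hB.symm i hi)
    have terms_zero : ∀ i ∈ s, a i * log (a i / b i) = 0 := fun i hi => by
      rw [ha_zero i hi, zero_mul]
    rw [sum_eq_zero ha_zero, sum_eq_zero terms_zero, zero_mul]
  · have cancel : ∀ i ∈ s, b i * (a i / b i) = a i := fun i hi => mul_div_cancel_of_imp' (hab i hi)
    have cancel_log : ∀ i ∈ s, b i * (a i / b i * log (a i / b i)) = a i * log (a i / b i) :=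
      fun i hi => by rw [← mul_assoc, cancel i hi]
    have jensen := convexOn_mul_log.map_centerMass_le hb hB
      (fun i hi => Set.mem_Ici.2 (div_nonneg (ha i hi) (hb i hi)))
    simp only [centerMass, Function.comp_apply, smul_eq_mul] at jensen
    rw [sum_congr rfl cancel, sum_congr rfl cancel_log, mul_assoc,
      inv_mul_eq_div _ (∑ i ∈ s, a i)] at jensen
    exact le_of_mul_le_mul_left jensen (inv_pos.2 hB)

theorem sum_mul_sub_log_sum_mul_exp_le {ι : Type*} (s : Finset ι) (p q f : ι → ℝ)
    (hp : ∀ i ∈ s, 0 ≤ p i) (hsum : ∑ i ∈ s, p i = 1)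
    (hq : ∀ i ∈ s, 0 ≤ q i) (hpq : ∀ i ∈ s, q i = 0 → p i = 0) :
    ∑ i ∈ s, p i * f i - log (∑ i ∈ s, q i * exp (f i)) ≤ ∑ i ∈ s, p i * log (p i / q i) := by
  have tilt : ∀ i ∈ s, p i * log (p i / (q i * exp (f i))) =
      p i * log (p i / q i) - p i * f i := by
    intro i hi
    rcases eq_or_ne (p i) 0 with hpi | hpi
    · simp only [hpi, zero_mul, sub_zero]
    · have hqi : q i ≠ 0 := mt (hpq i hi) hpi
      rw [← div_div, log_div (div_ne_zero hpi hqi) (exp_ne_zero _), log_exp, mul_sub]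
  have log_sum := sum_mul_log_sum_div_sum_le s p (fun i => q i * exp (f i)) hp
    (fun i hi => mul_nonneg (hq i hi) (exp_nonneg _))
    (fun i hi h => hpq i hi ((mul_eq_zero_iff_right (exp_ne_zero _)).1 h))
  rw [hsum, one_mul, one_div, log_inv, sum_congr rfl tilt, sum_sub_distrib] at log_sum
  linarith

theorem mi_ge_donsker_varadhan_general {Y Z : Type*} [Fintype Y] [Fintype Z]
    (p : Y × Z → ℝ) (pY : Y → ℝ) (pZ : Z → ℝ)
    (hnonneg : ∀ y z, 0 ≤ p (y, z))
    (hsum : ∑ yz : Y × Z, p yz = 1)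
    (hpY : ∀ y, pY y = ∑ z : Z, p (y, z))
    (hpZ : ∀ z, pZ z = ∑ y : Y, p (y, z)) (F : Y × Z → ℝ) :
    (∑ y : Y, ∑ z : Z, p (y, z) * log (p (y, z) / (pY y * pZ z))) ≥
      (∑ y : Y, ∑ z : Z, p (y, z) * F (y, z)) -
        log (∑ y : Y, ∑ z : Z, pY y * pZ z * exp (F (y, z))) := by
  have le_pY : ∀ y z, p (y, z) ≤ pY y := fun y z =>
    hpY y ▸ single_le_sum (fun z _ => hnonneg y z) (mem_univ z)
  have le_pZ : ∀ y z, p (y, z) ≤ pZ z := fun y z =>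
    hpZ z ▸ single_le_sum (f := fun y => p (y, z)) (fun y _ => hnonneg y z) (mem_univ y)
  have support_subset : ∀ y z, pY y * pZ z = 0 → p (y, z) = 0 := fun y z h =>
    (hnonneg y z).antisymm' <| (mul_eq_zero.1 h).elim (fun hy => hy ▸ le_pY y z)
      (fun hz => hz ▸ le_pZ y z)
  simpa only [Fintype.sum_prod_type] using
    sum_mul_sub_log_sum_mul_exp_le univ p (fun yz => pY yz.1 * pZ yz.2) F
      (fun yz _ => hnonneg yz.1 yz.2) hsum
      (fun yz _ => mul_nonneg ((hnonneg _ _).trans (le_pY yz.1 yz.2))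
        ((hnonneg _ _).trans (le_pZ yz.1 yz.2)))
      (fun yz _ => support_subset yz.1 yz.2)

/-- Donsker–Varadhan lower bound: for a strictly positive joint pmf `p` on
`Y × Z` with marginals `pY`, `pZ`, for every `F : Y × Z → ℝ`,
`MI(Z,Y) ≥ Σ_{y,z} p(y,z) F(y,z) − log (Σ_{y,z} pY y * pZ z * exp (F (y,z)))`. -/
theorem mi_ge_donsker_varadhan {Y Z : Type*} [Fintype Y] [Fintype Z] [Nonempty Y] [Nonempty Z]
    (p : Y × Z → ℝ) (pY : Y → ℝ) (pZ : Z → ℝ)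
    (hpos : ∀ y z, 0 < p (y, z))
    (hsum : ∑ yz : Y × Z, p yz = 1)
    (hpY : ∀ y, pY y = ∑ z : Z, p (y, z))
    (hpZ : ∀ z, pZ z = ∑ y : Y, p (y, z)) :
    ∀ F : Y × Z → ℝ,
      (∑ y : Y, ∑ z : Z, p (y, z) * Real.log (p (y, z) / (pY y * pZ z))) ≥
        (∑ y : Y, ∑ z : Z, p (y, z) * F (y, z)) -
          Real.log (∑ y : Y, ∑ z : Z, pY y * pZ z * Real.exp (F (y, z))) :=
  mi_ge_donsker_varadhan_general p pY pZ (fun y z => (hpos y z).le) hsum hpY hpZ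
end

section
/- Let Y and Z be nonempty finite types and let p : Y × Z → ℝ be a joint probability mass function with p(y,z) > 0 for all y, z, with marginals p_Y, p_Z, and define MI(Z,Y) = Σ_{y,z} p(y,z) · log( p(y,z) / (p_Y(y) · p_Z(z)) ). Then the supremum over all functions F : Y × Z → ℝ of the Donsker–Varadhan functional equals the mutual information: ⨆_{F : Y × Z → ℝ} ( Σ_{y,z} p(y,z) · F(y,z) − log( Σ_{y,z} p_Y(y) · p_Z(z) · exp(F(y,z)) ) ) = MI(Z,Y). -/
open Real Finset

/-!
Let `q_F ∝ q · exp F` be the exponential tilt of `q`. Then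
`KL(p ‖ q) - DV(F) = KL(p ‖ q_F)`, which is nonnegative by Gibbs' inequality, so
`DV(F) ≤ KL(p ‖ q)`. Equality would require `q_F = p`, i.e. `F = log (p / q)` up to an additive
constant. Where `p` vanishes this is `-∞`, so `F` is replaced there by `-t`, which costs only
`log (1 + exp (-t) · q {p = 0}) → 0` as `t → ∞`. Mutual information is the case `q = p_Y ⊗ p_Z`.
-/

section FiniteKL

variable {ι : Type*} [Fintype ι] {p q : ι → ℝ}

/-- The Kullback–Leibler divergence of densities on a finite type. The value `log 0 = 0` is
harmless when `p` vanishes wherever `q` does: it only enters through the convention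
`0 * log 0 = 0`. -/
noncomputable def finiteKL (p q : ι → ℝ) : ℝ :=
  ∑ i, p i * log (p i / q i)

/-- The Donsker–Varadhan functional of a test function `F`, the lower bound for `finiteKL p q`
which is to be maximized over `F`. -/
noncomputable def donskerVaradhan (p q F : ι → ℝ) : ℝ :=
  ∑ i, p i * F i - log (∑ i, q i * exp (F i))

/-- The exponential tilt of `q` by `F`, normalized to total mass one: the finite counterpart of
`MeasureTheory.Measure.tilted`. -/
noncomputable def expTilt (q F : ι → ℝ) (i : ι) : ℝ :=
  q i * exp (F i) / ∑ j, q j * exp (F j)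

/-- The log-likelihood ratio of `p` with respect to `q`, with its value `-∞` on the zero set of `p`
replaced by `-t`: a family of asymptotically optimal test functions for `donskerVaradhan p q`. -/
noncomputable def truncatedLogRatio (p q : ι → ℝ) (t : ℝ) (i : ι) : ℝ :=
  if p i = 0 then -t else log (p i / q i)

lemma sub_le_mul_log_div_s6 {a b : ℝ} (ha : 0 ≤ a) (hb : 0 ≤ b) (hab : b = 0 → a = 0) :
    a - b ≤ a * log (a / b) := by
  rcases eq_or_ne b 0 with hb0 | hb0
  · simp [hab hb0, hb0]
  · have hkl : 0 ≤ b * InformationTheory.klFun (a / b) :=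
      mul_nonneg hb (InformationTheory.klFun_nonneg (div_nonneg ha hb))
    have hexpand : b * InformationTheory.klFun (a / b) = a * log (a / b) + b - a := by
      rw [InformationTheory.klFun_apply]
      field_simp
    linarith

lemma finiteKL_nonneg (hp : ∀ i, 0 ≤ p i) (hq : ∀ i, 0 ≤ q i) (hpq : ∀ i, q i = 0 → p i = 0)
    (hmass : ∑ i, q i ≤ ∑ i, p i) : 0 ≤ finiteKL p q :=
  calc 0 ≤ ∑ i, (p i - q i) := by rwa [sum_sub_distrib, sub_nonneg]
    _ ≤ finiteKL p q := sum_le_sum fun i _ => sub_le_mul_log_div_s6 (hp i) (hq i) (hpq i)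

lemma sum_mul_exp_pos (hq : ∀ i, 0 ≤ q i) (hq0 : q ≠ 0) (F : ι → ℝ) :
    0 < ∑ i, q i * exp (F i) := by
  obtain ⟨i, hi⟩ := Function.ne_iff.mp hq0
  exact sum_pos' (fun j _ => mul_nonneg (hq j) (exp_pos _).le)
    ⟨i, mem_univ i, mul_pos ((hq i).lt_of_ne' hi) (exp_pos _)⟩

lemma sum_expTilt {F : ι → ℝ} (hF : ∑ i, q i * exp (F i) ≠ 0) : ∑ i, expTilt q F i = 1 := by
  simp only [expTilt, ← sum_div, div_self hF]

lemma finiteKL_expTilt (hpq : ∀ i, q i = 0 → p i = 0) (hsum : ∑ i, p i = 1) {F : ι → ℝ}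
    (hF : ∑ i, q i * exp (F i) ≠ 0) :
    finiteKL p (expTilt q F) = finiteKL p q - donskerVaradhan p q F := by
  set S := ∑ i, q i * exp (F i) with hS
  have hterm (i : ι) : p i * log (p i / expTilt q F i) =
      p i * log (p i / q i) - p i * F i + p i * log S := by
    rcases eq_or_ne (p i) 0 with hpi | hpi
    · simp [hpi]
    · have hqi : q i ≠ 0 := mt (hpq i) hpi
      have hratio : p i / expTilt q F i = p i / q i / exp (F i) * S := by
        rw [expTilt, ← hS]
        field_simp
      rw [hratio, log_mul (by positivity) hF, log_div (by positivity) (exp_ne_zero _), log_exp]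
      ring
  simp only [finiteKL, donskerVaradhan, hterm, sum_add_distrib, sum_sub_distrib, ← sum_mul, hsum,
    ← hS]
  ring

lemma donskerVaradhan_le_finiteKL (hp : ∀ i, 0 ≤ p i) (hq : ∀ i, 0 ≤ q i)
    (hpq : ∀ i, q i = 0 → p i = 0) (hsum : ∑ i, p i = 1) (F : ι → ℝ) :
    donskerVaradhan p q F ≤ finiteKL p q := by
  have hq0 : q ≠ 0 := by
    rintro rfl
    simp [hpq] at hsum
  have hS : 0 < ∑ i, q i * exp (F i) := sum_mul_exp_pos hq hq0 F
  have hgibbs : 0 ≤ finiteKL p (expTilt q F) := by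
    refine finiteKL_nonneg hp (fun i => ?_) (fun i hi => hpq i ?_) ?_
    · exact div_nonneg (mul_nonneg (hq i) (exp_pos _).le) hS.le
    · simpa [expTilt, hS.ne'] using hi
    · rw [sum_expTilt hS.ne', hsum]
  rwa [finiteKL_expTilt hpq hsum hS.ne', sub_nonneg] at hgibbs

lemma sum_mul_exp_truncatedLogRatio (hp : ∀ i, 0 ≤ p i) (hq : ∀ i, 0 ≤ q i)
    (hpq : ∀ i, q i = 0 → p i = 0) (t : ℝ) :
    ∑ i, q i * exp (truncatedLogRatio p q t i) =
      ∑ i, p i + exp (-t) * ∑ i with p i = 0, q i := by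
  rw [sum_filter, mul_sum, ← sum_add_distrib]
  refine sum_congr rfl fun i _ => ?_
  rcases eq_or_ne (p i) 0 with hpi | hpi
  · simp [truncatedLogRatio, hpi, mul_comm]
  · have hqi : q i ≠ 0 := mt (hpq i) hpi
    have hratio : 0 < p i / q i := div_pos ((hp i).lt_of_ne' hpi) ((hq i).lt_of_ne' hqi)
    simp [truncatedLogRatio, hpi, exp_log hratio, mul_div_cancel₀ _ hqi]

lemma donskerVaradhan_truncatedLogRatio (hp : ∀ i, 0 ≤ p i) (hq : ∀ i, 0 ≤ q i)
    (hpq : ∀ i, q i = 0 → p i = 0) (t : ℝ) :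
    donskerVaradhan p q (truncatedLogRatio p q t) =
      finiteKL p q - log (∑ i, p i + exp (-t) * ∑ i with p i = 0, q i) := by
  rw [donskerVaradhan, sum_mul_exp_truncatedLogRatio hp hq hpq, finiteKL]
  congr 1
  refine sum_congr rfl fun i _ => ?_
  by_cases hpi : p i = 0 <;> simp [truncatedLogRatio, hpi]

lemma tendsto_donskerVaradhan_truncatedLogRatio (hp : ∀ i, 0 ≤ p i) (hq : ∀ i, 0 ≤ q i)
    (hpq : ∀ i, q i = 0 → p i = 0) (hsum : ∑ i, p i = 1) :
    Filter.Tendsto (fun t => donskerVaradhan p q (truncatedLogRatio p q t)) Filter.atTop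
      (nhds (finiteKL p q)) := by
  simp only [donskerVaradhan_truncatedLogRatio hp hq hpq, hsum]
  have hmass : Filter.Tendsto (fun t => 1 + exp (-t) * ∑ i with p i = 0, q i) Filter.atTop
      (nhds 1) := by
    simpa using (tendsto_exp_neg_atTop_nhds_zero.mul_const (∑ i with p i = 0, q i)).const_add 1
  simpa using (hmass.log one_ne_zero).const_sub (finiteKL p q)

theorem isLUB_range_donskerVaradhan (hp : ∀ i, 0 ≤ p i) (hq : ∀ i, 0 ≤ q i)
    (hpq : ∀ i, q i = 0 → p i = 0) (hsum : ∑ i, p i = 1) :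
    IsLUB (Set.range (donskerVaradhan p q)) (finiteKL p q) :=
  ⟨Set.forall_mem_range.2 (donskerVaradhan_le_finiteKL hp hq hpq hsum), fun _ hb =>
    le_of_tendsto' (tendsto_donskerVaradhan_truncatedLogRatio hp hq hpq hsum) fun _ =>
      hb (Set.mem_range_self _)⟩

end FiniteKL

lemma eq_zero_of_marginal_mul_marginal_eq_zero {Y Z : Type*} [Fintype Y] [Fintype Z]
    {p : Y × Z → ℝ} (hp : ∀ y z, 0 ≤ p (y, z)) {y : Y} {z : Z}
    (h : (∑ z', p (y, z')) * ∑ y', p (y', z) = 0) : p (y, z) = 0 := by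
  rcases mul_eq_zero.1 h with hY | hZ
  · exact (sum_eq_zero_iff_of_nonneg fun z' _ => hp y z').1 hY z (mem_univ z)
  · exact (sum_eq_zero_iff_of_nonneg fun y' _ => hp y' z).1 hZ y (mem_univ y)

theorem donsker_varadhan_iSup_eq_mi_general {Y Z : Type*} [Fintype Y] [Fintype Z]
    (p : Y × Z → ℝ) (pY : Y → ℝ) (pZ : Z → ℝ)
    (hp : ∀ y z, 0 ≤ p (y, z))
    (hsum : ∑ yz : Y × Z, p yz = 1)
    (hpY : ∀ y, pY y = ∑ z : Z, p (y, z))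
    (hpZ : ∀ z, pZ z = ∑ y : Y, p (y, z)) :
    (⨆ F : Y × Z → ℝ,
        ((∑ y : Y, ∑ z : Z, p (y, z) * F (y, z)) -
          Real.log (∑ y : Y, ∑ z : Z, pY y * pZ z * Real.exp (F (y, z))))) =
      ∑ y : Y, ∑ z : Z, p (y, z) * Real.log (p (y, z) / (pY y * pZ z)) := by
  obtain rfl : pY = fun y => ∑ z, p (y, z) := funext hpY
  obtain rfl : pZ = fun z => ∑ y, p (y, z) := funext hpZ
  have hlub := isLUB_range_donskerVaradhan (p := p)
    (q := fun yz => (∑ z, p (yz.1, z)) * ∑ y, p (y, yz.2)) (fun yz => hp yz.1 yz.2)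
    (fun yz => mul_nonneg (sum_nonneg fun z _ => hp yz.1 z) (sum_nonneg fun y _ => hp y yz.2))
    (fun _ => eq_zero_of_marginal_mul_marginal_eq_zero hp) hsum
  simpa only [donskerVaradhan, finiteKL, Fintype.sum_prod_type] using hlub.ciSup_eq

/-- The supremum over all `F : Y × Z → ℝ` of the Donsker–Varadhan functional
equals the mutual information `MI(Z,Y)`. -/
theorem donsker_varadhan_iSup_eq_mi {Y Z : Type*} [Fintype Y] [Fintype Z]
    [Nonempty Y] [Nonempty Z]
    (p : Y × Z → ℝ) (pY : Y → ℝ) (pZ : Z → ℝ)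
    (hpos : ∀ y z, 0 < p (y, z))
    (hsum : ∑ yz : Y × Z, p yz = 1)
    (hpY : ∀ y, pY y = ∑ z : Z, p (y, z))
    (hpZ : ∀ z, pZ z = ∑ y : Y, p (y, z)) :
    (⨆ F : Y × Z → ℝ,
        ((∑ y : Y, ∑ z : Z, p (y, z) * F (y, z)) -
          Real.log (∑ y : Y, ∑ z : Z, pY y * pZ z * Real.exp (F (y, z))))) =
      ∑ y : Y, ∑ z : Z, p (y, z) * Real.log (p (y, z) / (pY y * pZ z)) :=
  donsker_varadhan_iSup_eq_mi_general p pY pZ (fun y z => (hpos y z).le) hsum hpY hpZ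
end
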